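/- Under the hypotheses of the PLATO bound — (i) for every state x, every t ∈ {1,…,T}, and every pair of actions u, u′, |Q_t(x,u;π*) − Q_t(x,u′;π*)| ≤ δ; (ii) KL(π_θ(x) ‖ π*(x)) ≤ ε_θ* for every state x; (iii) KL(π_λ(x) ‖ π_θ(x)) ≤ ε_λθ for every state x — if additionally the teacher-matching error satisfies ε_λθ ≤ 1/T², then J(π_θ) ≤ J(π*) + δ·(2T+1)·√ε_θ*. In particular, for fixed δ and ε_θ*, the excess cost of the learned policy over the expert grows at most linearly in the horizon T. -/

import Mathlib

/-!
By the performance-difference identity (`sum_cost_add_value`), the excess cost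
`J(π_θ) - J(π*)` is the sum over `t < T` of the expectation, under the state distribution of `π_θ`,
of `Q_{T-t}(x, π_θ, π*) - Q_{T-t}(x, π*, π*)`. Since the oscillation of `Q_{T-t}(x, ·; π*)` is at
most `δ`, each integrand is at most `δ · ‖π_θ(x) - π*(x)‖₁`, and a weak form of Pinsker's
inequality (`sum_abs_sub_le_of_kl`), obtained through the Hellinger distance, bounds the `ℓ¹`
distance by `2 √ε_θ*`. Hence the excess cost is at most `2 T δ √ε_θ*`, below the
claimed `δ (2 T + 1) √ε_θ*`.
-/


open Finset

/-- Expectation of `f` under a PMF on a finite type. -/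
noncomputable def pmfExp {α : Type*} [Fintype α] (P : PMF α) (f : α → ℝ) : ℝ :=
  ∑ a, (P a).toReal * f a

/-- Total variation distance `TV(P,Q) = (1/2)·Σ_a |P(a) − Q(a)|`. -/
noncomputable def tvDist {α : Type*} [Fintype α] (P Q : PMF α) : ℝ :=
  (1 / 2) * ∑ a, |(P a).toReal - (Q a).toReal|

/-- KL divergence `KL(P‖Q) = Σ_a P(a)·ln(P(a)/Q(a))`, interpreted as `+∞`
if `P` is not absolutely continuous with respect to `Q`. -/
noncomputable def klDivPMF {α : Type*} [Fintype α] (P Q : PMF α) : EReal :=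
  if ∀ a, Q a = 0 → P a = 0 then
    (((∑ a, (P a).toReal * Real.log ((P a).toReal / (Q a).toReal)) : ℝ) : EReal)
  else ⊤

/-- State distribution of the MDP: `stateDist p π μ₁ n` is the distribution `d_π^{n+1}`
of the state at time `n+1` when executing policy `π` from initial distribution `μ₁`,
i.e. `d_π^1 = μ₁` and `d_π^{t+1}(x′) = Σ_{x,u} d_π^t(x)·π(u|x)·p(x′|x,u)`. -/
noncomputable def stateDist {S A : Type*} (p : S → A → PMF S) (π : S → PMF A)
    (μ₁ : PMF S) : ℕ → PMF S
  | 0 => μ₁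
  | n + 1 => (stateDist p π μ₁ n).bind fun x => (π x).bind fun u => p x u

/-- Total expected cost `J(π) = Σ_{t=1}^T E_{x∼d_π^t} E_{u∼π(x)}[c(x,u)]`. -/
noncomputable def totalCost {S A : Type*} [Fintype S] [Fintype A] (p : S → A → PMF S)
    (c : S → A → ℝ) (μ₁ : PMF S) (T : ℕ) (π : S → PMF A) : ℝ :=
  ∑ t ∈ Finset.range T,
    pmfExp (stateDist p π μ₁ t) fun x => pmfExp (π x) fun u => c x u

/-- Action-conditioned cost-to-go: `Qact p c π̄ t x u` is the expected sum of costs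
over `t` steps obtained by taking action `u` in state `x` and thereafter following
`π̄` for the remaining `t−1` steps. -/
noncomputable def Qact {S A : Type*} [Fintype S] [Fintype A] (p : S → A → PMF S)
    (c : S → A → ℝ) (πbar : S → PMF A) : ℕ → S → A → ℝ
  | 0, _, _ => 0
  | t + 1, x, u =>
      c x u + pmfExp (p x u) fun x' => pmfExp (πbar x') fun u' => Qact p c πbar t x' u'

/-- `Qpol p c π π̄ t x = Q_t(x, π, π̄)`: expected cost of sampling the first action
from `π(x)` and following `π̄` for the remaining `t−1` steps. -/
noncomputable def Qpol {S A : Type*} [Fintype S] [Fintype A] (p : S → A → PMF S)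
    (c : S → A → ℝ) (π πbar : S → PMF A) (t : ℕ) (x : S) : ℝ :=
  pmfExp (π x) fun u => Qact p c πbar t x u

lemma sum_toReal {α : Type*} [Fintype α] (P : PMF α) : ∑ a, (P a).toReal = 1 := by
  rw [← ENNReal.toReal_sum (fun a _ => P.apply_ne_top a), ← tsum_fintype (L := .unconditional α),
    P.tsum_coe, ENNReal.toReal_one]

lemma pmfExp_bind {α β : Type*} [Fintype α] [Fintype β] (P : PMF α) (f : α → PMF β)
    (g : β → ℝ) : pmfExp (P.bind f) g = pmfExp P fun x => pmfExp (f x) g := by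
  have h : ∀ b, ((P.bind f) b).toReal = ∑ a, (P a).toReal * ((f a) b).toReal := by
    intro b
    rw [PMF.bind_apply, tsum_fintype, ENNReal.toReal_sum]
    · simp [ENNReal.toReal_mul]
    · exact fun a _ => ENNReal.mul_ne_top (P.apply_ne_top a) ((f a).apply_ne_top b)
  simp only [pmfExp, h, Finset.sum_mul, Finset.mul_sum]
  rw [Finset.sum_comm]
  simp only [mul_assoc]

lemma pmfExp_add {α : Type*} [Fintype α] (P : PMF α) (f g : α → ℝ) :
    (pmfExp P fun x => f x + g x) = pmfExp P f + pmfExp P g := by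
  simp [pmfExp, mul_add, Finset.sum_add_distrib]

lemma pmfExp_sub {α : Type*} [Fintype α] (P : PMF α) (f g : α → ℝ) :
    (pmfExp P fun x => f x - g x) = pmfExp P f - pmfExp P g := by
  simp [pmfExp, mul_sub, Finset.sum_sub_distrib]

lemma pmfExp_le {α : Type*} [Fintype α] (P : PMF α) (f : α → ℝ) (B : ℝ) (h : ∀ x, f x ≤ B) :
    pmfExp P f ≤ B := by
  calc pmfExp P f ≤ ∑ a, (P a).toReal * B :=
        Finset.sum_le_sum fun a _ => mul_le_mul_of_nonneg_left (h a) ENNReal.toReal_nonneg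
    _ = B := by rw [← Finset.sum_mul, sum_toReal, one_mul]

/-- The pointwise inequality behind `H² ≤ KL` for the squared Hellinger distance `H²`; it is
`log y ≤ y - 1` at `y = √(q / p)`. The terms `p - q` cancel after summation. -/
lemma sq_sqrt_sub_le (p q : ℝ) (hp : 0 ≤ p) (hq : 0 ≤ q) (h : q = 0 → p = 0) :
    (√p - √q) ^ 2 ≤ p * Real.log (p / q) - p + q := by
  rcases hp.eq_or_lt with rfl | hp0
  · simp [Real.sq_sqrt hq]
  have hq0 : 0 < q := hq.lt_of_ne fun e => hp0.ne' (h e.symm)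
  have hsp := Real.sqrt_pos.2 hp0
  have hsq := Real.sqrt_pos.2 hq0
  have h1 := Real.log_le_sub_one_of_pos (div_pos hsq hsp)
  have h2 : Real.log (p / q) = -2 * Real.log (√q / √p) := by
    rw [Real.log_div hp0.ne' hq0.ne', Real.log_div hsq.ne' hsp.ne', Real.log_sqrt hp,
      Real.log_sqrt hq]
    ring
  have h3 : p * (√q / √p) = √p * √q := by
    field_simp
    rw [Real.sq_sqrt hp]
  have h4 := mul_le_mul_of_nonneg_left h1 hp
  rw [mul_sub, h3] at h4
  rw [h2]
  nlinarith [Real.sq_sqrt hp, Real.sq_sqrt hq]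

/-- Weak Pinsker inequality: by Cauchy–Schwarz applied to
`|P - Q| = |√P - √Q| (√P + √Q)`, the `ℓ¹` distance is at most twice the Hellinger distance, whose
square is at most the KL divergence. -/
lemma sum_abs_sub_le_of_kl {α : Type*} [Fintype α] (P Q : PMF α) (ε : ℝ)
    (h : klDivPMF P Q ≤ (ε : EReal)) :
    ∑ a, |(P a).toReal - (Q a).toReal| ≤ 2 * √ε := by
  unfold klDivPMF at h
  split_ifs at h with hac
  swap
  · exact absurd (top_le_iff.1 h) (EReal.coe_ne_top ε)
  rw [EReal.coe_le_coe_iff] at h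
  have hP := sum_toReal P
  have hQ := sum_toReal Q
  have hH : ∑ a, |√(P a).toReal - √(Q a).toReal| ^ 2 ≤ ε := by
    calc _ ≤ ∑ a, ((P a).toReal * Real.log ((P a).toReal / (Q a).toReal)
            - (P a).toReal + (Q a).toReal) := by
          refine Finset.sum_le_sum fun a _ => ?_
          rw [sq_abs]
          refine sq_sqrt_sub_le _ _ ENNReal.toReal_nonneg ENNReal.toReal_nonneg fun e => ?_
          have := (ENNReal.toReal_eq_zero_iff _).1 e
          simp [hac a (this.resolve_right (Q.apply_ne_top a))]
      _ ≤ ε := by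
          rw [Finset.sum_add_distrib, Finset.sum_sub_distrib, hP, hQ]
          linarith
  have hS : ∑ a, (√(P a).toReal + √(Q a).toReal) ^ 2 ≤ 4 := by
    calc _ ≤ ∑ a, (2 * (P a).toReal + 2 * (Q a).toReal) := by
          refine Finset.sum_le_sum fun a _ => ?_
          nlinarith [sq_nonneg (√(P a).toReal - √(Q a).toReal),
            Real.sq_sqrt (ENNReal.toReal_nonneg (a := P a)),
            Real.sq_sqrt (ENNReal.toReal_nonneg (a := Q a))]
      _ = 4 := by
          rw [Finset.sum_add_distrib, ← Finset.mul_sum, ← Finset.mul_sum, hP, hQ]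
          norm_num
  have hε : 0 ≤ ε := le_trans (Finset.sum_nonneg fun a _ => by positivity) hH
  have hfac : ∀ a, |(P a).toReal - (Q a).toReal|
      = |√(P a).toReal - √(Q a).toReal| * (√(P a).toReal + √(Q a).toReal) := by
    intro a
    have hn : 0 ≤ √(P a).toReal + √(Q a).toReal := by positivity
    nth_rewrite 1 [← abs_of_nonneg hn]
    rw [← abs_mul]
    congr 1
    nlinarith [Real.sq_sqrt (ENNReal.toReal_nonneg (a := P a)),
      Real.sq_sqrt (ENNReal.toReal_nonneg (a := Q a))]
  have hCS := Finset.sum_mul_sq_le_sq_mul_sq Finset.univ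
    (fun a => |√(P a).toReal - √(Q a).toReal|) (fun a => √(P a).toReal + √(Q a).toReal)
  simp only [hfac]
  refine abs_le_of_sq_le_sq' ?_ (by positivity) |>.2
  rw [mul_pow, Real.sq_sqrt hε]
  refine hCS.trans ((mul_le_mul hH hS (Finset.sum_nonneg fun a _ => by positivity) hε).trans ?_)
  linarith

/-- Two expectations of a function of oscillation at most `δ` differ by at most `δ ‖P - Q‖₁`:
subtracting a value of `f` from `f` does not change the difference. -/
lemma pmfExp_sub_le {α : Type*} [Fintype α] (P Q : PMF α) (f : α → ℝ) (δ : ℝ)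
    (hf : ∀ u u', |f u - f u'| ≤ δ) :
    pmfExp P f - pmfExp Q f ≤ δ * ∑ a, |(P a).toReal - (Q a).toReal| := by
  obtain ⟨u₀, -⟩ := P.support_nonempty
  have h : pmfExp P f - pmfExp Q f
      = ∑ a, ((P a).toReal - (Q a).toReal) * (f a - f u₀) := by
    simp only [pmfExp, mul_sub, sub_mul, Finset.sum_sub_distrib, ← Finset.sum_mul, sum_toReal]
    ring
  rw [h, Finset.mul_sum]
  refine Finset.sum_le_sum fun a _ => (le_abs_self _).trans ?_
  rw [abs_mul, mul_comm]
  exact mul_le_mul_of_nonneg_right (hf a u₀) (abs_nonneg _)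

/-- Performance-difference identity, stopped after `n` of `n + k` steps: running `π` for `n` steps
and `π̄` for the remaining `k` costs as much as running `π̄` throughout, plus the accumulated
one-step disadvantages of `π` relative to `π̄`. -/
lemma sum_cost_add_value {S A : Type*} [Fintype S] [Fintype A] (p : S → A → PMF S)
    (c : S → A → ℝ) (μ₁ : PMF S) (π πbar : S → PMF A) (n k : ℕ) :
    (∑ t ∈ Finset.range n, pmfExp (stateDist p π μ₁ t) fun x => pmfExp (π x) fun u => c x u)
        + pmfExp (stateDist p π μ₁ n) (Qpol p c πbar πbar k)
      = pmfExp μ₁ (Qpol p c πbar πbar (n + k))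
        + ∑ t ∈ Finset.range n, pmfExp (stateDist p π μ₁ t) fun x =>
            Qpol p c π πbar (n + k - t) x - Qpol p c πbar πbar (n + k - t) x := by
  induction n generalizing k with
  | zero => simp [stateDist]
  | succ n ih =>
    have hstep : (pmfExp (stateDist p π μ₁ n) fun x => pmfExp (π x) fun u => c x u)
        + pmfExp (stateDist p π μ₁ (n + 1)) (Qpol p c πbar πbar k)
        = pmfExp (stateDist p π μ₁ n) (Qpol p c π πbar (k + 1)) := by
      rw [stateDist, pmfExp_bind, ← pmfExp_add]
      congr 1
      funext x
      rw [pmfExp_bind, ← pmfExp_add]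
      rfl
    have hk := ih (k + 1)
    rw [Finset.sum_range_succ, Finset.sum_range_succ,
      show n + 1 + k = n + (k + 1) by omega, Nat.add_sub_cancel_left, pmfExp_sub]
    linarith

/-- The performance-difference identity over the whole horizon. -/
lemma totalCost_eq {S A : Type*} [Fintype S] [Fintype A] (p : S → A → PMF S)
    (c : S → A → ℝ) (μ₁ : PMF S) (T : ℕ) (π πbar : S → PMF A) :
    totalCost p c μ₁ T π = pmfExp μ₁ (Qpol p c πbar πbar T)
      + ∑ t ∈ Finset.range T, pmfExp (stateDist p π μ₁ t) fun x =>
          Qpol p c π πbar (T - t) x - Qpol p c πbar πbar (T - t) x := by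
  have h := sum_cost_add_value p c μ₁ π πbar T 0
  have h0 : pmfExp (stateDist p π μ₁ T) (Qpol p c πbar πbar 0) = 0 := by
    simp [pmfExp, Qpol, Qact]
  rw [h0, add_zero] at h
  exact h

/-- **PLATO bound with small teacher-matching error.** Under the hypotheses of the
PLATO bound, if additionally `ε_λθ ≤ 1/T²`, then
`J(π_θ) ≤ J(π*) + δ·(2T+1)·√ε_θ*`: the excess cost over the expert grows at most
linearly in the horizon `T`. -/
theorem plato_total_cost_bound_linear {S A : Type*} [Fintype S] [Fintype A]
    (T : ℕ) (μ₁ : PMF S) (p : S → A → PMF S) (c : S → A → ℝ)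
    (hc : ∀ x u, c x u ∈ Set.Icc (0 : ℝ) 1)
    (πstar πθ πlam : S → PMF A)
    (δ : ℝ) (hδ : 0 ≤ δ)
    (hQ : ∀ (x : S) (t : ℕ), 1 ≤ t → t ≤ T → ∀ u u' : A,
      |Qact p c πstar t x u - Qact p c πstar t x u'| ≤ δ)
    (εθ εlam : ℝ) (hεθ : 0 ≤ εθ) (hεlam : 0 ≤ εlam)
    (hklθ : ∀ x, klDivPMF (πθ x) (πstar x) ≤ ((εθ : ℝ) : EReal))
    (hkllam : ∀ x, klDivPMF (πlam x) (πθ x) ≤ ((εlam : ℝ) : EReal))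
    (hεlamT : εlam ≤ 1 / (T : ℝ) ^ 2) :
    totalCost p c μ₁ T πθ ≤ totalCost p c μ₁ T πstar
      + δ * (2 * T + 1) * Real.sqrt εθ := by
  have hself : totalCost p c μ₁ T πstar = pmfExp μ₁ (Qpol p c πstar πstar T) := by
    rw [totalCost_eq p c μ₁ T πstar πstar]
    simp [pmfExp]
  rw [totalCost_eq p c μ₁ T πθ πstar, hself]
  have hsum : (∑ t ∈ Finset.range T, pmfExp (stateDist p πθ μ₁ t) fun x =>
      Qpol p c πθ πstar (T - t) x - Qpol p c πstar πstar (T - t) x)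
      ≤ ∑ _t ∈ Finset.range T, δ * (2 * √εθ) := by
    refine Finset.sum_le_sum fun t ht => pmfExp_le _ _ _ fun x => ?_
    have ht' := Finset.mem_range.1 ht
    exact (pmfExp_sub_le _ _ _ δ (hQ x (T - t) (by omega) (by omega))).trans
      (mul_le_mul_of_nonneg_left (sum_abs_sub_le_of_kl _ _ _ (hklθ x)) hδ)
  rw [Finset.sum_const, Finset.card_range, nsmul_eq_mul] at hsum
  nlinarith [mul_nonneg hδ (Real.sqrt_nonneg εθ)]
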